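/- Let α, β, γ ∈ ℂ with α+β ∉ ℤ and γ ∉ ℤ. Then there exists ε > 0 such that for all x, y, z ∈ ℂ with |x| < ε, |y| < ε, |z| < ε, the triple series ∑_{j,k,m ≥ 0} (α)_j (β)_k (1−γ)_m (γ)_{j+k−m} / (j! · k! · m! · (α+β)_{j+k−m}) · x^j y^k z^m converges absolutely and equals (1−z)^{α+β−1} · (1−xz)^{γ−α} · (1−x)^{−γ} · (1−yz)^{−β} · ₂F₁[β, γ; α+β; (y−x)(1−z)/((1−x)(1−yz))]. -/

import Mathlib

open Finset

/-- Pochhammer symbol `(a)_k` for complex `a` and integer `k`. -/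
noncomputable def cpoch (a : ℂ) (k : ℤ) : ℂ :=
  if 0 ≤ k then ∏ i ∈ Finset.range k.toNat, (a + (i : ℂ))
  else (∏ i ∈ Finset.range (-k).toNat, (a + (k : ℂ) + (i : ℂ)))⁻¹

/-- Gauss hypergeometric series `₂F₁[a, b; c; w]`. -/
noncomputable def F21 (a b c w : ℂ) : ℂ :=
  ∑' ℓ : ℕ, cpoch a ℓ * cpoch b ℓ / ((ℓ.factorial : ℂ) * cpoch c ℓ) * w ^ ℓ

/-- General term of the Gelfand–Graev–Retakh triple series. -/
noncomputable def ggrTerm (α β γ x y z : ℂ) : ℕ × ℕ × ℕ → ℂ := fun p =>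
  cpoch α p.1 * cpoch β p.2.1 * cpoch (1 - γ) p.2.2 *
      cpoch γ ((p.1 : ℤ) + (p.2.1 : ℤ) - (p.2.2 : ℤ)) /
    ((p.1.factorial : ℂ) * (p.2.1.factorial : ℂ) * (p.2.2.factorial : ℂ) *
      cpoch (α + β) ((p.1 : ℤ) + (p.2.1 : ℤ) - (p.2.2 : ℤ))) *
    x ^ p.1 * y ^ p.2.1 * z ^ p.2.2


/-- Rising factorial as a product. -/
noncomputable def po (a : ℂ) (n : ℕ) : ℂ := ∏ i ∈ Finset.range n, (a + (i : ℂ))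

/-- Normalised rising factorial. -/
noncomputable def rr (a : ℂ) (n : ℕ) : ℂ := po a n / (n.factorial : ℂ)

lemma po_zero (a : ℂ) : po a 0 = 1 := by simp [po]

lemma po_succ (a : ℂ) (n : ℕ) : po a (n + 1) = po a n * (a + n) := by
  simp [po, Finset.prod_range_succ]

lemma po_add (a : ℂ) (m n : ℕ) : po a (m + n) = po a m * po (a + m) n := by
  simp only [po, Finset.prod_range_add]
  congr 1
  apply Finset.prod_congr rfl
  intro i _
  push_cast; ring

lemma po_refl (a : ℂ) (n : ℕ) : po (a - n) n = (-1) ^ n * po (1 - a) n := by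
  unfold po
  have h1 : (-1 : ℂ) ^ n = ∏ _i ∈ Finset.range n, (-1 : ℂ) := by simp
  rw [← Finset.prod_range_reflect, h1, ← Finset.prod_mul_distrib]
  apply Finset.prod_congr rfl
  intro i hi
  have : i < n := Finset.mem_range.1 hi
  have h2 : ((n - 1 - i : ℕ) : ℂ) = n - 1 - i := by
    rw [Nat.cast_sub (by omega), Nat.cast_sub (by omega)]; simp
  rw [h2]; ring

lemma po_ne_zero {a : ℂ} (h : ∀ n : ℤ, a ≠ n) (n : ℕ) : po a n ≠ 0 := by
  unfold po
  rw [Finset.prod_ne_zero_iff]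
  intro i _ h0
  apply h (-(i : ℤ))
  push_cast
  linear_combination h0

lemma shift_ne {a : ℂ} (h : ∀ n : ℤ, a ≠ n) (k : ℤ) : ∀ n : ℤ, a + k ≠ n := by
  intro n h0
  apply h (n - k)
  push_cast
  linear_combination h0

lemma cpoch_nat (a : ℂ) (n : ℕ) : cpoch a n = po a n := by
  simp [cpoch, po]

/-- Shifted Pochhammer conversion. -/
lemma cpoch_conv {a : ℂ} (h : ∀ n : ℤ, a ≠ n) (N m : ℕ) :
    cpoch a ((N : ℤ) - (m : ℤ)) * ((-1) ^ m * po (1 - a) m) = po (a - m) N := by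
  rw [← po_refl]
  by_cases hN : m ≤ N
  · obtain ⟨d, rfl⟩ := Nat.exists_eq_add_of_le hN
    have : ((m + d : ℕ) : ℤ) - (m : ℤ) = (d : ℤ) := by push_cast; ring
    rw [this, cpoch_nat, po_add]
    rw [sub_add_cancel]; ring
  · push Not at hN
    obtain ⟨d, rfl⟩ := Nat.exists_eq_add_of_le hN.le
    have hd : 0 < d := by omega
    have e : (N : ℤ) - ((N + d : ℕ) : ℤ) = -(d : ℤ) := by push_cast; ring
    have : cpoch a (-(d : ℤ)) = (po (a - d) d)⁻¹ := by
      unfold cpoch po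
      rw [if_neg (by omega)]
      simp [sub_eq_add_neg]
    rw [e, this, po_add]
    have e2 : a - ((N + d : ℕ) : ℂ) + N = a - d := by push_cast; ring
    rw [e2]
    have : po (a - d) d ≠ 0 := by
      apply po_ne_zero
      have := shift_ne h (-(d : ℤ))
      push_cast at this
      simpa [sub_eq_add_neg] using this
    field_simp

lemma po_swap (c : ℂ) (N m : ℕ) :
    po (1 - c) m * po c N = po (1 - c - N) m * po (c - m) N := by
  induction m with
  | zero => simp [po_zero]
  | succ m ih =>
    have h1 := po_succ (c - (m + 1 : ℕ)) N
    have h2 := po_add (c - (m + 1 : ℕ)) 1 N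
    rw [add_comm 1 N, h1] at h2
    have h3 : po (c - (m + 1 : ℕ)) 1 = c - (m + 1) := by simp [po]
    have h4 : c - ((m + 1 : ℕ) : ℂ) + (1 : ℕ) = c - m := by push_cast; ring
    rw [h3, h4] at h2
    push_cast at h2
    rw [po_succ, po_succ]
    push_cast
    linear_combination (1 - c + m) * ih + po (1 - c - N) m * h2

lemma rr_eq_multichoose (a : ℂ) (n : ℕ) : rr a n = Ring.multichoose a n := by
  have hp : Polynomial.eval a (ascPochhammer ℂ n) = po a n := by
    induction n with
    | zero => simp [po]
    | succ n ih => simp [ascPochhammer_succ_eval, ih, po_succ]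
  have h := Ring.factorial_nsmul_multichoose_eq_ascPochhammer a n
  rw [Polynomial.ascPochhammer_smeval_eq_eval, hp] at h
  have hf : (n.factorial : ℂ) ≠ 0 := by exact_mod_cast n.factorial_ne_zero
  rw [rr, ← h, nsmul_eq_mul]
  field_simp

lemma rr_eq_choose (a : ℂ) (n : ℕ) : rr a n = (-1) ^ n * Ring.choose (-a) n := by
  rw [rr_eq_multichoose, Ring.choose_neg', Int.negOnePow_def]
  simp [Units.smul_def, ← mul_assoc, ← mul_pow]

lemma rr_add (a b : ℂ) (n : ℕ) :
    rr (a + b) n = ∑ p ∈ Finset.HasAntidiagonal.antidiagonal n, rr a p.1 * rr b p.2 := by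
  rw [rr_eq_choose, neg_add, Ring.add_choose_eq n (Commute.all _ _), Finset.mul_sum]
  apply Finset.sum_congr rfl
  intro p hp
  rw [rr_eq_choose, rr_eq_choose, ← Finset.HasAntidiagonal.mem_antidiagonal.1 hp, pow_add]
  ring

lemma binom_hasSum (a w : ℂ) (hw : ‖w‖ < 1) :
    HasSum (fun n : ℕ => rr a n * w ^ n) ((1 - w) ^ (-a)) := by
  have h := (Complex.one_div_one_sub_cpow_hasFPowerSeriesOnBall_zero a).hasSum
    (y := w) (by simpa [enorm_eq_nnnorm, ← NNReal.coe_lt_coe] using hw)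
  simp only [FormalMultilinearSeries.ofScalars_apply_eq, zero_add, one_div, ← Complex.cpow_neg,
    ← Ring.multichoose_eq, ← rr_eq_multichoose, smul_eq_mul] at h
  exact h

lemma po_one (n : ℕ) : po 1 n = n.factorial := by
  induction n with
  | zero => simp [po]
  | succ n ih => rw [po_succ, ih, Nat.factorial_succ]; push_cast; ring

lemma fact_po (r i : ℕ) : ((r + i).factorial : ℂ) = r.factorial * po (1 + r) i := by
  rw [← po_one, ← po_one, po_add]

lemma rr_mul_fact (a : ℂ) (n : ℕ) : rr a n * n.factorial = po a n := by
  have hf : (n.factorial : ℂ) ≠ 0 := by exact_mod_cast n.factorial_ne_zero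
  rw [rr]; field_simp

lemma choose_fact (p i : ℕ) :
    ((p + i).choose p : ℂ) * (p.factorial * i.factorial) = (p + i).factorial := by
  rw [← mul_assoc, Nat.choose_symm_add]
  exact_mod_cast Nat.add_choose_mul_factorial_mul_factorial p i

/-- Splitting a normalised rising factorial. -/
lemma rr_split (a : ℂ) (p i : ℕ) :
    rr a (p + i) * ((p + i).choose p : ℂ) = rr a p * rr (a + p) i := by
  have hp : (p.factorial : ℂ) ≠ 0 := by exact_mod_cast p.factorial_ne_zero
  have hi : (i.factorial : ℂ) ≠ 0 := by exact_mod_cast i.factorial_ne_zero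
  have hpi : ((p + i).factorial : ℂ) ≠ 0 := by exact_mod_cast (p + i).factorial_ne_zero
  have h := choose_fact p i
  rw [rr, rr, rr, po_add]
  field_simp
  linear_combination po a p * po (a + p) i * h

lemma po_vand (a b : ℂ) (n : ℕ) :
    po (a + b) n = ∑ p ∈ Finset.HasAntidiagonal.antidiagonal n,
      (n.choose p.1 : ℂ) * (po a p.1 * po b p.2) := by
  rw [← rr_mul_fact, rr_add, Finset.sum_mul]
  apply Finset.sum_congr rfl
  intro p hp
  rw [← Finset.HasAntidiagonal.mem_antidiagonal.1 hp, ← choose_fact, ← rr_mul_fact a,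
    ← rr_mul_fact b]
  ring

lemma po_neg_eq_zero {m i : ℕ} (h : m < i) : po (-(m : ℂ)) i = 0 := by
  unfold po
  exact Finset.prod_eq_zero (Finset.mem_range.2 h) (by simp)

lemma sub_nat_ne {a : ℂ} (h : ∀ n : ℤ, a ≠ n) (d : ℕ) : ∀ n : ℤ, a - d ≠ n := by
  have := shift_ne h (-(d : ℤ))
  push_cast at this
  simpa [sub_eq_add_neg] using this

lemma stage1_term {c : ℂ} (hc : ∀ n : ℤ, c ≠ n) (l i r : ℕ) :
    rr (1 - c) (r + i) * (po (-((r + i : ℕ) : ℂ)) i / po (c - (r + i : ℕ)) (l + i))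
      = rr (1 - c - l) r / po c l := by
  have h1 := po_swap c (l + i) (r + i)
  have h2 : po (-((r + i : ℕ) : ℂ)) i = (-1) ^ i * po (1 + r) i := by
    rw [← sub_neg_eq_add (1 : ℂ) r, ← po_refl]; congr 1; push_cast; ring
  have h3 : po (1 - c - (l + i : ℕ)) (r + i) = (-1) ^ i * po (c + l) i * po (1 - c - l) r := by
    rw [add_comm r i, po_add]
    have e : (1 : ℂ) - c - (l + i : ℕ) = 1 - c - l - i := by push_cast; ring
    rw [e, po_refl, sub_add_cancel]
    congr 3; ring
  have h4 := po_add c l i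
  have n1 : po (c - (r + i : ℕ)) (l + i) ≠ 0 := po_ne_zero (sub_nat_ne hc _) _
  have n2 : po c l ≠ 0 := po_ne_zero hc _
  have n3 : po (c + l) i ≠ 0 := by
    have := po_ne_zero hc (l + i)
    rw [h4] at this
    exact right_ne_zero_of_mul this
  have hr : (r.factorial : ℂ) ≠ 0 := by exact_mod_cast r.factorial_ne_zero
  have hri : ((r + i).factorial : ℂ) ≠ 0 := by exact_mod_cast (r + i).factorial_ne_zero
  have h5 := fact_po r i
  rw [h5] at hri
  have n4 := right_ne_zero_of_mul hri
  rw [rr, rr, h5, h2]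
  rw [h3, h4] at h1
  field_simp
  have h6 : ((-1 : ℂ) ^ i) * (-1) ^ i = 1 := by rw [← mul_pow]; simp
  have h7 : po (c + l) i * (po (1 - c) (r + i) * (-1) ^ i * po c l) =
     po (c + l) i * (po (1 - c - l) r * po (c - (r + i : ℕ)) (l + i)) := by
    linear_combination (-1) ^ i * h1 + po (c + l) i * po (1 - c - l) r * po (c - (r + i : ℕ)) (l + i) * h6
  have := mul_left_cancel₀ n3 h7
  push_cast at this ⊢
  linear_combination this

lemma one_sub_ne {w : ℂ} (hw : ‖w‖ < 1) : 1 - w ≠ 0 := by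
  intro h
  have : w = 1 := by linear_combination -h
  rw [this] at hw; simp at hw

lemma stage1_part {c z : ℂ} (hc : ∀ n : ℤ, c ≠ n) (hz : ‖z‖ < 1) (l i : ℕ) :
    HasSum (fun m : ℕ => rr (1 - c) m * z ^ m * (po (-(m : ℂ)) i / po (c - m) (l + i)))
      ((1 - z) ^ (c - 1) * (1 / po c l * (1 - z) ^ l * z ^ i)) := by
  have hinj : Function.Injective (fun r : ℕ => r + i) := add_left_injective i
  rw [← hinj.hasSum_iff]
  · have h := ((binom_hasSum (1 - c - l) z hz).mul_right (z ^ i / po c l))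
    have e : (1 - z) ^ (-(1 - c - (l : ℂ))) * (z ^ i / po c l) =
      (1 - z) ^ (c - 1) * (1 / po c l * (1 - z) ^ l * z ^ i) := by
      have : -(1 - c - (l : ℂ)) = (c - 1) + l := by ring
      rw [this, Complex.cpow_add _ _ (one_sub_ne hz), Complex.cpow_natCast]
      ring
    rw [e] at h
    refine h.congr_fun ?_ 
    intro r
    have := stage1_term hc l i r
    simp only [Function.comp]
    rw [mul_right_comm, this, pow_add]
    ring
  · intro m hm
    have : m < i := by
      by_contra hlt
      exact hm ⟨m - i, by simp; omega⟩
    rw [po_neg_eq_zero this]; simp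

lemma stage1 {c z : ℂ} (γ : ℂ) (hc : ∀ n : ℤ, c ≠ n) (hz : ‖z‖ < 1) (N : ℕ) :
    HasSum (fun m : ℕ => rr (1 - c) m * z ^ m * (po (γ - m) N / po (c - m) N))
      ((1 - z) ^ (c - 1) * ∑ p ∈ Finset.HasAntidiagonal.antidiagonal N,
        (N.choose p.1 : ℂ) * (po γ p.1 / po c p.1 * (1 - z) ^ p.1 * z ^ p.2)) := by
  have h : HasSum (fun m : ℕ => ∑ p ∈ Finset.HasAntidiagonal.antidiagonal N,
      (N.choose p.1 : ℂ) * po γ p.1 *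
        (rr (1 - c) m * z ^ m * (po (-(m : ℂ)) p.2 / po (c - m) N)))
      (∑ p ∈ Finset.HasAntidiagonal.antidiagonal N, (N.choose p.1 : ℂ) * po γ p.1 *
        ((1 - z) ^ (c - 1) * (1 / po c p.1 * (1 - z) ^ p.1 * z ^ p.2))) := by
    apply hasSum_sum
    intro p hp
    apply HasSum.mul_left
    have := stage1_part hc hz p.1 p.2
    rwa [Finset.HasAntidiagonal.mem_antidiagonal.1 hp] at this
  convert h using 1
  · funext m
    rw [sub_eq_add_neg γ, po_vand, Finset.sum_div, Finset.mul_sum]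
    apply Finset.sum_congr rfl
    intro p _
    ring
  · rw [Finset.mul_sum]
    apply Finset.sum_congr rfl
    intro p _
    ring

lemma rr_bound (a : ℂ) (n : ℕ) : ‖rr a n‖ ≤ (‖a‖ + 1) ^ n := by
  have h : ‖po a n‖ ≤ (‖a‖ + 1) ^ n * n.factorial := by
    induction n with
    | zero => simp [po]
    | succ n ih =>
      rw [po_succ, norm_mul, pow_succ, Nat.factorial_succ]
      have h1 : ‖a + n‖ ≤ (‖a‖ + 1) * (n + 1) := by
        have := norm_add_le a (n : ℂ)
        rw [Complex.norm_natCast] at this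
        have h0 : 0 ≤ ‖a‖ * n := by positivity
        nlinarith
      push_cast
      calc ‖po a n‖ * ‖a + n‖ ≤ ((‖a‖ + 1) ^ n * n.factorial) * ((‖a‖ + 1) * (n + 1)) := by
            gcongr
        _ = _ := by ring
  have hf : (0 : ℝ) < n.factorial := by exact_mod_cast n.factorial_pos
  rw [rr, norm_div, Complex.norm_natCast, div_le_iff₀ hf]
  exact h

lemma dist_int {c : ℂ} (hc : ∀ n : ℤ, c ≠ n) : ∃ d : ℝ, 0 < d ∧ ∀ n : ℤ, d ≤ ‖c + n‖ := by
  have ho := Complex.isOpen_compl_range_intCast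
  have hm : c ∈ (Set.range ((↑) : ℤ → ℂ))ᶜ := by
    rintro ⟨n, hn⟩
    exact hc n hn.symm
  obtain ⟨d, hd, hb⟩ := Metric.isOpen_iff.1 ho c hm
  refine ⟨d, hd, fun n => ?_⟩
  by_contra hlt
  push Not at hlt
  have : ((-n : ℤ) : ℂ) ∈ Metric.ball c d := by
    rw [Metric.mem_ball, dist_comm, dist_eq_norm]
    simpa using hlt
  exact hb this ⟨-n, rfl⟩

lemma ratio_bound {c : ℂ} (γ : ℂ) (hc : ∀ n : ℤ, c ≠ n) :
    ∃ K : ℝ, 1 ≤ K ∧ ∀ m N : ℕ, ‖po (γ - m) N / po (c - m) N‖ ≤ K ^ N := by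
  obtain ⟨d, hd, hb⟩ := dist_int hc
  refine ⟨1 + ‖γ - c‖ / d, by simp; positivity, fun m N => ?_⟩
  unfold po
  rw [← Finset.prod_div_distrib, norm_prod]
  have : (1 + ‖γ - c‖ / d) ^ N = ∏ _i ∈ Finset.range N, (1 + ‖γ - c‖ / d) := by simp
  rw [this]
  apply Finset.prod_le_prod
  · intros; positivity
  · intro i _
    have h1 := hb ((i : ℤ) - m)
    push_cast at h1
    have e : c + ((i : ℂ) - m) = c - m + i := by ring
    rw [e] at h1
    have hpos : 0 < ‖c - m + i‖ := by linarith
    rw [norm_div, div_le_iff₀ hpos]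
    have e2 : γ - m + i = (c - m + i) + (γ - c) := by ring
    rw [e2]
    refine (norm_add_le _ _).trans ?_
    rw [add_mul, one_mul]
    gcongr
    rw [div_mul_eq_mul_div, le_div_iff₀ hd]
    gcongr

lemma summable_geo2 {a b : ℝ} (ha : 0 ≤ a) (hb : 0 ≤ b) (ha1 : a < 1) (hb1 : b < 1) :
    Summable (fun p : ℕ × ℕ => a ^ p.1 * b ^ p.2) :=
  (summable_geometric_of_lt_one ha ha1).mul_of_nonneg (summable_geometric_of_lt_one hb hb1)
    (fun _ => by positivity) (fun _ => by positivity)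

lemma summable_geo3 {a b c : ℝ} (ha : 0 ≤ a) (hb : 0 ≤ b) (hc : 0 ≤ c)
    (ha1 : a < 1) (hb1 : b < 1) (hc1 : c < 1) :
    Summable (fun p : ℕ × ℕ × ℕ => a ^ p.1 * (b ^ p.2.1 * c ^ p.2.2)) :=
  (summable_geometric_of_lt_one ha ha1).mul_of_nonneg (summable_geo2 hb hc hb1 hc1)
    (fun _ => by positivity) (fun _ => by simp only [Pi.zero_apply]; positivity)

lemma hasSum_antidiag {F : ℕ × ℕ → ℂ} (hF : Summable F) :
    HasSum (fun n => ∑ p ∈ Finset.HasAntidiagonal.antidiagonal n, F p) (∑' p, F p) := by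
  have h := (Finset.HasAntidiagonal.sigmaAntidiagonalEquivProd (A := ℕ)).hasSum_iff.2 hF.hasSum
  refine h.sigma (fun n => ?_)
  exact Finset.hasSum _ _

lemma choose_bound (p i : ℕ) : ‖((p + i).choose p : ℂ)‖ ≤ 2 ^ (p + i) := by
  rw [Complex.norm_natCast]
  exact_mod_cast Nat.choose_le_two_pow _ _

/-- One-variable binomial-transform summation. -/
lemma lemB {α x z : ℂ} {u : ℕ → ℂ} {M R C : ℝ} (hM : 1 ≤ M) (hR : 1 ≤ R)
    (hα : ∀ n, ‖rr α n‖ ≤ M ^ n) (hu : ∀ n, ‖u n‖ ≤ C * R ^ n)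
    (hx : 2 * M * ‖x‖ * R < 1) (hz : ‖z‖ < 1) :
    HasSum (fun j => rr α j * x ^ j * ∑ p ∈ Finset.HasAntidiagonal.antidiagonal j,
        (j.choose p.1 : ℂ) * (u p.1 * z ^ p.2))
      ((1 - x * z) ^ (-α) * ∑' p, rr α p * (x / (1 - x * z)) ^ p * u p) := by
  have hx2 : 2 * M * ‖x‖ < 1 := by
    refine lt_of_le_of_lt ?_ hx
    exact le_mul_of_one_le_right (by positivity) hR
  have hx1 : ‖x‖ < 1 := by
    refine lt_of_le_of_lt ?_ hx2
    exact le_mul_of_one_le_left (by positivity) (by linarith)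
  have hxz2 : 2 * M * ‖x‖ * ‖z‖ < 1 := by
    refine lt_of_le_of_lt ?_ hx2
    exact mul_le_of_le_one_right (by positivity) hz.le
  have hxz : ‖x * z‖ < 1 := by
    rw [norm_mul]
    exact mul_lt_one_of_nonneg_of_lt_one_left (norm_nonneg _) hx1 hz.le
  have hne := one_sub_ne hxz
  set F : ℕ × ℕ → ℂ := fun p =>
    rr α (p.1 + p.2) * x ^ (p.1 + p.2) * (((p.1 + p.2).choose p.1 : ℂ) * (u p.1 * z ^ p.2)) with hF
  have hS : Summable F := by
    refine Summable.of_norm_bounded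
      ((summable_geo2 (a := 2 * M * ‖x‖ * R) (b := 2 * M * ‖x‖ * ‖z‖)
        (by positivity) (by positivity) hx hxz2).mul_left C) ?_
    rintro ⟨p, i⟩
    simp only [hF, norm_mul, norm_pow]
    calc _ ≤ M ^ (p + i) * ‖x‖ ^ (p + i) * (2 ^ (p + i) * ((C * R ^ p) * ‖z‖ ^ i)) := by
          gcongr
          · exact hα _
          · exact choose_bound _ _
          · exact hu _
      _ = _ := by simp only [mul_pow, pow_add]; ring
  have h1 := hasSum_antidiag hS
  have h2 : ∑' p, F p = (1 - x * z) ^ (-α) * ∑' p, rr α p * (x / (1 - x * z)) ^ p * u p := by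
    rw [hS.tsum_prod, ← tsum_mul_left]
    congr 1
    funext p
    have hb := (binom_hasSum (α + p) (x * z) hxz).mul_left (rr α p * x ^ p * u p)
    have : ∀ i, F (p, i) = rr α p * x ^ p * u p * (rr (α + p) i * (x * z) ^ i) := by
      intro i
      simp only [hF]
      rw [mul_pow, pow_add]
      linear_combination x ^ p * x ^ i * u p * z ^ i * rr_split α p i
    simp_rw [this]
    rw [hb.tsum_eq, neg_add, Complex.cpow_add _ _ hne, Complex.cpow_neg _ (p : ℂ),
      Complex.cpow_natCast, div_pow]
    ring
  rw [← h2]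
  refine h1.congr_fun ?_
  intro n
  rw [Finset.mul_sum]
  apply Finset.sum_congr rfl
  intro p hp
  simp only [hF]
  rw [Finset.HasAntidiagonal.mem_antidiagonal.1 hp]

/-- Binomial transform of `g`. -/
noncomputable def Phi (z : ℂ) (N : ℕ) (g : ℕ → ℂ) : ℂ :=
  ∑ p ∈ Finset.HasAntidiagonal.antidiagonal N, (N.choose p.1 : ℂ) * (g p.1 * z ^ p.2)

lemma Phi_succ (z : ℂ) (N : ℕ) (g : ℕ → ℂ) :
    Phi z (N + 1) g = z * Phi z N g + Phi z N (fun n => g (n + 1)) := by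
  unfold Phi
  rw [Finset.sum_antidiagonal_choose_succ_mul (fun i j => g i * z ^ j), Finset.mul_sum]
  congr 1
  · apply Finset.sum_congr rfl
    intro p _
    rw [pow_succ]; ring
  · apply Finset.sum_congr rfl
    intro p hp
    have h := Finset.HasAntidiagonal.mem_antidiagonal.1 hp
    congr 2
    rw [← h, Nat.choose_symm_add]

lemma Phi_add (z : ℂ) (j k : ℕ) (g : ℕ → ℂ) :
    Phi z (j + k) g = Phi z j (fun p => Phi z k (fun q => g (p + q))) := by
  induction j generalizing g with
  | zero => simp [Phi]
  | succ j ih =>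
    rw [show j + 1 + k = (j + k) + 1 by ring, Phi_succ, ih, ih, Phi_succ]
    congr 2
    funext p
    congr 1
    funext q
    congr 1; ring

/-- Reorganising the double series around `Y = X + W`. -/
lemma stage3a {α β X W : ℂ} {g : ℕ → ℂ} {M R : ℝ} (hM : 1 ≤ M) (hR : 1 ≤ R)
    (hα : ∀ n, ‖rr α n‖ ≤ M ^ n) (hβ : ∀ n, ‖rr β n‖ ≤ M ^ n) (hg : ∀ n, ‖g n‖ ≤ R ^ n)
    (hX : 2 * M * ‖X‖ * R < 1) (hW : 2 * M * ‖W‖ * R < 1) :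
    ∑' p, rr α p * X ^ p * ∑' q, rr β q * (X + W) ^ q * g (p + q) =
      ∑' k, rr β k * W ^ k * ∑' n, rr (α + β + k) n * X ^ n * g (k + n) := by
  set F : ℕ × ℕ × ℕ → ℂ := fun t =>
    rr α t.1 * X ^ t.1 * (rr β (t.2.1 + t.2.2) * ((t.2.1 + t.2.2).choose t.2.1 : ℂ) *
      (W ^ t.2.1 * X ^ t.2.2) * g (t.1 + (t.2.1 + t.2.2))) with hF
  have hS : Summable F := by
    have hX' : M * ‖X‖ * R < 1 := by
      refine lt_of_le_of_lt ?_ hX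
      have : 0 ≤ M * ‖X‖ * R := by positivity
      nlinarith
    refine Summable.of_norm_bounded
      (summable_geo3 (a := M * ‖X‖ * R) (b := 2 * M * ‖W‖ * R) (c := 2 * M * ‖X‖ * R)
        (by positivity) (by positivity) (by positivity) hX' hW hX) ?_
    rintro ⟨p, k, i⟩
    simp only [hF, norm_mul, norm_pow]
    calc _ ≤ M ^ p * ‖X‖ ^ p * (M ^ (k + i) * 2 ^ (k + i) * (‖W‖ ^ k * ‖X‖ ^ i) *
            R ^ (p + (k + i))) := by
          gcongr
          · exact hα _
          · exact hβ _
          · exact choose_bound _ _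
          · exact hg _
      _ = _ := by simp only [mul_pow, pow_add]; ring
  have hL : ∑' p, rr α p * X ^ p * ∑' q, rr β q * (X + W) ^ q * g (p + q) = ∑' t, F t := by
    rw [hS.tsum_prod]
    congr 1
    funext p
    rw [← (hasSum_antidiag (hS.prod_factor p)).tsum_eq, ← tsum_mul_left]
    congr 1
    funext q
    rw [add_comm X W, Commute.add_pow' (Commute.all W X), Finset.mul_sum, Finset.sum_mul,
      Finset.mul_sum]
    apply Finset.sum_congr rfl
    intro t ht
    simp only [hF]
    rw [Finset.HasAntidiagonal.mem_antidiagonal.1 ht, nsmul_eq_mul]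
    ring
  rw [hL]
  let e : ℕ × ℕ × ℕ ≃ ℕ × ℕ × ℕ :=
    ⟨fun t => (t.2.1, t.1, t.2.2), fun t => (t.2.1, t.1, t.2.2), fun _ => rfl, fun _ => rfl⟩
  have hS2 : Summable (F ∘ e) := e.summable_iff.2 hS
  rw [← e.tsum_eq F]
  change ∑' t, (F ∘ e) t = _
  rw [hS2.tsum_prod]
  congr 1
  funext k
  rw [← (hasSum_antidiag (hS2.prod_factor k)).tsum_eq, ← tsum_mul_left]
  congr 1
  funext n
  have hv := rr_add α (β + k) n
  rw [← add_assoc] at hv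
  rw [hv, Finset.sum_mul, Finset.sum_mul, Finset.mul_sum]
  apply Finset.sum_congr rfl
  intro t ht
  have h := Finset.HasAntidiagonal.mem_antidiagonal.1 ht
  simp only [hF, e, Function.comp, Equiv.coe_fn_mk]
  rw [rr_split, ← h, show t.1 + (k + t.2) = k + (t.1 + t.2) by ring, pow_add]
  ring

/-- Reduction of the Appell-type double series to a Gauss series. -/
lemma stage3 {α β γ X W s : ℂ} {M R : ℝ} (hM : 1 ≤ M) (hR : 1 ≤ R)
    (hc : ∀ n : ℤ, α + β ≠ n)
    (hα : ∀ n, ‖rr α n‖ ≤ M ^ n) (hβ : ∀ n, ‖rr β n‖ ≤ M ^ n)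
    (hg : ∀ n, ‖po γ n / po (α + β) n * s ^ n‖ ≤ R ^ n)
    (hX : 2 * M * ‖X‖ * R < 1) (hW : 2 * M * ‖W‖ * R < 1) (hs : ‖X * s‖ < 1) :
    ∑' p, rr α p * X ^ p * ∑' q, rr β q * (X + W) ^ q *
        (po γ (p + q) / po (α + β) (p + q) * s ^ (p + q)) =
      (1 - X * s) ^ (-γ) * F21 β γ (α + β) (W * s / (1 - X * s)) := by
  rw [stage3a (g := fun n => po γ n / po (α + β) n * s ^ n) hM hR hα hβ hg hX hW, F21,
    ← tsum_mul_left]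
  congr 1
  funext k
  have hb := (binom_hasSum (γ + k) (X * s) hs).mul_left (po γ k / po (α + β) k * s ^ k)
  have h1 : ∀ n, rr (α + β + k) n * X ^ n * (po γ (k + n) / po (α + β) (k + n) * s ^ (k + n)) =
      po γ k / po (α + β) k * s ^ k * (rr (γ + k) n * (X * s) ^ n) := by
    intro n
    have n1 := po_ne_zero hc (k + n)
    rw [po_add] at n1
    have n2 := left_ne_zero_of_mul n1
    have n3 := right_ne_zero_of_mul n1
    have hf : (n.factorial : ℂ) ≠ 0 := by exact_mod_cast n.factorial_ne_zero
    rw [po_add, po_add, rr, rr, pow_add, mul_pow]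
    field_simp
  simp_rw [h1]
  rw [hb.tsum_eq, neg_add, Complex.cpow_add _ _ (one_sub_ne hs), Complex.cpow_neg _ (k : ℂ),
    Complex.cpow_natCast, div_pow, cpoch_nat, cpoch_nat, cpoch_nat, mul_pow, rr]
  have hf : (k.factorial : ℂ) ≠ 0 := by exact_mod_cast k.factorial_ne_zero
  have n2 := po_ne_zero hc k
  have n3 := one_sub_ne hs
  field_simp

lemma cpow_div_near {a b r : ℂ} (ha : 0 < a.re) (hb : 0 < b.re) :
    (a / b) ^ r = a ^ r * b ^ (-r) := by
  have ha0 : a ≠ 0 := by rintro rfl; simp at ha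
  have hb0 : b ≠ 0 := by rintro rfl; simp at hb
  have haa := Complex.abs_arg_lt_pi_div_two_iff.2 (Or.inl ha)
  have hbb := Complex.abs_arg_lt_pi_div_two_iff.2 (Or.inl hb)
  rw [abs_lt] at haa hbb
  have hinv : (b⁻¹).arg = - b.arg := by
    rw [Complex.arg_inv, if_neg (by linarith [Real.pi_pos])]
  have hlog : Complex.log (a / b) = Complex.log a - Complex.log b := by
    rw [div_eq_mul_inv, (Complex.log_mul_eq_add_log_iff ha0 (inv_ne_zero hb0)).2,
      Complex.log_inv _ (by linarith [Real.pi_pos])]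
    · ring
    · rw [hinv]
      constructor <;> linarith
  rw [Complex.cpow_def_of_ne_zero (div_ne_zero ha0 hb0), Complex.cpow_def_of_ne_zero ha0,
    Complex.cpow_def_of_ne_zero hb0, hlog, ← Complex.exp_add]
  congr 1; ring

lemma one_sub_re {w : ℂ} (hw : ‖w‖ < 1) : 0 < (1 - w).re := by
  have := Complex.re_le_norm w
  simp; linarith

lemma div_small {x w : ℂ} {e : ℝ} (hx : ‖x‖ ≤ e) (hw : ‖w‖ ≤ 1 / 2) : ‖x / (1 - w)‖ ≤ 2 * e := by
  have h1 : 1 / 2 ≤ ‖1 - w‖ := by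
    have := norm_sub_norm_le (1 : ℂ) w
    simp at this
    linarith
  rw [norm_div, div_le_iff₀ (by linarith)]
  have : 0 ≤ e := (norm_nonneg _).trans hx
  nlinarith

lemma ggrTerm_eq {α β γ : ℂ} (x y z : ℂ) (hc : ∀ n : ℤ, α + β ≠ n) (hγ : ∀ n : ℤ, γ ≠ n)
    (j k m : ℕ) :
    ggrTerm α β γ x y z (j, k, m) = rr α j * x ^ j * (rr β k * y ^ k *
      (rr (1 - (α + β)) m * z ^ m *
        (po (γ - m) (j + k) / po (α + β - m) (j + k)))) := by
  have h1 := cpoch_conv hγ (j + k) m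
  have h2 := cpoch_conv hc (j + k) m
  have n1 : po (α + β - m) (j + k) ≠ 0 := po_ne_zero (sub_nat_ne hc _) _
  rw [← h2] at n1
  have n2 := left_ne_zero_of_mul n1
  have n3 := right_ne_zero_of_mul (right_ne_zero_of_mul n1)
  rw [← h1, ← h2]
  simp only [ggrTerm]
  push_cast at n2 ⊢
  rw [cpoch_nat, cpoch_nat, cpoch_nat, rr, rr, rr]
  have hj : (j.factorial : ℂ) ≠ 0 := by exact_mod_cast j.factorial_ne_zero
  have hk : (k.factorial : ℂ) ≠ 0 := by exact_mod_cast k.factorial_ne_zero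
  have hm : (m.factorial : ℂ) ≠ 0 := by exact_mod_cast m.factorial_ne_zero
  field_simp

set_option maxHeartbeats 1000000 in
lemma ggr_core {α β γ x y z : ℂ} {M : ℝ} (hM : 1 ≤ M)
    (hc : ∀ n : ℤ, α + β ≠ n) (hγ : ∀ n : ℤ, γ ≠ n)
    (hα : ∀ n, ‖rr α n‖ ≤ M ^ n) (hβ : ∀ n, ‖rr β n‖ ≤ M ^ n)
    (hcc : ∀ n, ‖rr (1 - (α + β)) n‖ ≤ M ^ n)
    (hrat : ∀ m N : ℕ, ‖po (γ - m) N / po (α + β - m) N‖ ≤ M ^ N)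
    (hx : ‖x‖ < 1 / (100 * M ^ 2)) (hy : ‖y‖ < 1 / (100 * M ^ 2))
    (hz : ‖z‖ < 1 / (100 * M ^ 2)) :
    Summable (fun p : ℕ × ℕ × ℕ => ‖ggrTerm α β γ x y z p‖) ∧
      (∑' p : ℕ × ℕ × ℕ, ggrTerm α β γ x y z p) =
        (1 - z) ^ (α + β - 1) * (1 - x * z) ^ (γ - α) * (1 - x) ^ (-γ) *
          (1 - y * z) ^ (-β) *
          F21 β γ (α + β) ((y - x) * (1 - z) / ((1 - x) * (1 - y * z))) := by
  set e : ℝ := 1 / (100 * M ^ 2) with he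
  have hM2 : 1 ≤ M ^ 2 := one_le_pow₀ hM
  have heM : e * M ^ 2 = 1 / 100 := by rw [he]; field_simp
  have he0 : 0 < e := by positivity
  have he1 : e ≤ 1 / 100 := by nlinarith
  have hMe : M * e ≤ 1 / 100 := by nlinarith
  have small : ∀ {w : ℂ} {t : ℝ}, ‖w‖ ≤ t * e → t < 25 → 2 * M * ‖w‖ * (2 * M) < 1 := by
    intro w t hw ht
    have : M ^ 2 * ‖w‖ ≤ M ^ 2 * (t * e) := by gcongr
    have h2 : M ^ 2 * (t * e) = t / 100 := by linear_combination t * heM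
    nlinarith
  have hx1 : ‖x‖ < 1 := by linarith
  have hy1 : ‖y‖ < 1 := by linarith
  have hz1 : ‖z‖ < 1 := by linarith
  have hxz : ‖x * z‖ ≤ 1 / 100 := by
    rw [norm_mul]; nlinarith [norm_nonneg x, norm_nonneg z]
  have hyz : ‖y * z‖ ≤ 1 / 100 := by
    rw [norm_mul]; nlinarith [norm_nonneg y, norm_nonneg z]
  -- absolute convergence
  have hSn : Summable (fun p : ℕ × ℕ × ℕ => ‖ggrTerm α β γ x y z p‖) := by
    have k1 : ∀ {w : ℂ}, ‖w‖ < e → M ^ 2 * ‖w‖ < 1 := by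
      intro w hw
      have : M ^ 2 * ‖w‖ ≤ M ^ 2 * e := by gcongr
      nlinarith
    have k2 : M * ‖z‖ < 1 := by
      have : M * ‖z‖ ≤ M * e := by gcongr
      linarith
    refine Summable.of_nonneg_of_le (fun _ => norm_nonneg _) ?_
      (summable_geo3 (a := M ^ 2 * ‖x‖) (b := M ^ 2 * ‖y‖) (c := M * ‖z‖)
        (by positivity) (by positivity) (by positivity) (k1 hx) (k1 hy) k2)
    rintro ⟨j, k, m⟩
    rw [ggrTerm_eq x y z hc hγ]
    simp only [norm_mul, norm_pow]
    calc _ ≤ M ^ j * ‖x‖ ^ j * (M ^ k * ‖y‖ ^ k * (M ^ m * ‖z‖ ^ m * M ^ (j + k))) := by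
          gcongr
          · exact hα _
          · exact hβ _
          · exact hcc _
          · exact hrat _ _
      _ = _ := by simp only [mul_pow, pow_add]; ring
  refine ⟨hSn, ?_⟩
  have hS : Summable (ggrTerm α β γ x y z) := hSn.of_norm
  set g : ℕ → ℂ := fun n => po γ n / po (α + β) n * (1 - z) ^ n with hgdef
  have hg : ∀ n, ‖g n‖ ≤ (2 * M) ^ n := by
    intro n
    have h1 := hrat 0 n
    simp only [Nat.cast_zero, sub_zero] at h1
    have h2 : ‖1 - z‖ ≤ 2 := by
      have := norm_sub_le (1 : ℂ) z
      simp at this; linarith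
    simp only [hgdef]
    rw [norm_mul, norm_pow, mul_pow, mul_comm]
    gcongr
  have hR : 1 ≤ 2 * M := by linarith
  set X := x / (1 - x * z) with hX
  set Y := y / (1 - y * z) with hY
  have hXn : ‖X‖ ≤ 2 * e := div_small hx.le (by linarith)
  have hYn : ‖Y‖ ≤ 2 * e := div_small hy.le (by linarith)
  have hWn : ‖Y - X‖ ≤ 4 * e := (norm_sub_le _ _).trans (by linarith)
  -- sum over m
  have s1 : ∀ j k, ∑' m, ggrTerm α β γ x y z (j, k, m) =
      (1 - z) ^ (α + β - 1) * (rr α j * x ^ j * (rr β k * y ^ k * Phi z (j + k) g)) := by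
    intro j k
    simp_rw [ggrTerm_eq x y z hc hγ]
    rw [tsum_mul_left, tsum_mul_left, (stage1 γ hc hz1 (j + k)).tsum_eq, Phi]
    ring
  -- sum over k
  set u : ℕ → ℂ := fun p => (1 - y * z) ^ (-β) * ∑' q, rr β q * Y ^ q * g (p + q) with hu
  have hk : ∀ p, HasSum (fun k => rr β k * y ^ k * Phi z k (fun q => g (p + q))) (u p) := by
    intro p
    have hb : ∀ n, ‖(fun q => g (p + q)) n‖ ≤ (2 * M) ^ p * (2 * M) ^ n := by
      intro n
      rw [← pow_add]; exact hg _
    have hsm : 2 * M * ‖y‖ * (2 * M) < 1 := small (t := 1) (by linarith) (by norm_num)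
    have h := lemB (α := β) (x := y) (z := z) (u := fun q => g (p + q)) hM hR hβ hb hsm hz1
    simp only [hu, hY, Phi]
    exact h
  have s2 : ∀ j, ∑' k, rr β k * y ^ k * Phi z (j + k) g = Phi z j u := by
    intro j
    have : HasSum (fun k => ∑ p ∈ Finset.HasAntidiagonal.antidiagonal j,
        (j.choose p.1 : ℂ) * ((rr β k * y ^ k * Phi z k (fun q => g (p.1 + q))) * z ^ p.2))
        (Phi z j u) := by
      apply hasSum_sum
      intro p _
      exact ((hk p.1).mul_right _).mul_left _
    rw [← this.tsum_eq]
    congr 1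
    funext k
    rw [Phi_add, Phi, Finset.mul_sum]
    apply Finset.sum_congr rfl
    intro p _
    ring
  have hub : ∃ C : ℝ, ∀ n, ‖u n‖ ≤ C * (2 * M) ^ n := by
    have hq0 : 0 ≤ M * ‖Y‖ * (2 * M) := by positivity
    have hq : M * ‖Y‖ * (2 * M) < 1 := by
      have := small hYn (by norm_num)
      nlinarith
    refine ⟨‖(1 - y * z) ^ (-β)‖ * (1 - M * ‖Y‖ * (2 * M))⁻¹, fun n => ?_⟩
    simp only [hu]
    rw [norm_mul, mul_assoc]
    gcongr
    refine tsum_of_norm_bounded ((hasSum_geometric_of_lt_one hq0 hq).mul_right _) ?_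
    intro q
    rw [norm_mul, norm_mul, norm_pow]
    calc _ ≤ M ^ q * ‖Y‖ ^ q * (2 * M) ^ (n + q) := by
          gcongr
          · exact hβ _
          · exact hg _
      _ = _ := by simp only [mul_pow, pow_add]; ring
  obtain ⟨C, hC⟩ := hub
  have s3 := lemB (α := α) (x := x) (z := z) (u := u) (M := M) (R := 2 * M) (C := C) hM hR hα hC
      (small (t := 1) (by linarith) (by norm_num)) hz1
  have hXs : 1 - X * (1 - z) = (1 - x) / (1 - x * z) := by
    have := one_sub_ne (w := x * z) (by linarith)
    rw [hX]; field_simp; ring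
  have hXs1 : ‖X * (1 - z)‖ < 1 := by
    have h2 : ‖1 - z‖ ≤ 2 := by
      have := norm_sub_le (1 : ℂ) z
      simp at this; linarith
    rw [norm_mul]
    nlinarith [norm_nonneg X, norm_nonneg (1 - z)]
  have s4 := stage3 (γ := γ) (X := X) (W := Y - X) (s := 1 - z) (M := M) (R := 2 * M) hM hR hc hα hβ hg
    (small hXn (by norm_num)) (small hWn (by norm_num)) hXs1
  rw [add_sub_cancel] at s4
  have key : ∑' p, ggrTerm α β γ x y z p = (1 - z) ^ (α + β - 1) *
      ((1 - x * z) ^ (-α) * ((1 - y * z) ^ (-β) *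
        ((1 - X * (1 - z)) ^ (-γ) * F21 β γ (α + β) ((Y - X) * (1 - z) / (1 - X * (1 - z)))))) := by
    rw [hS.tsum_prod]
    have : ∀ j, ∑' q : ℕ × ℕ, ggrTerm α β γ x y z (j, q) =
        (1 - z) ^ (α + β - 1) * (rr α j * x ^ j * Phi z j u) := by
      intro j
      rw [(hS.prod_factor j).tsum_prod]
      simp_rw [s1]
      rw [tsum_mul_left, tsum_mul_left, s2]
    simp_rw [this]
    rw [tsum_mul_left]
    congr 1
    refine s3.tsum_eq.trans ?_
    congr 1
    rw [← s4, ← tsum_mul_left]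
    congr 1
    funext p
    simp only [hu, hgdef]
    ring
  have n1 := one_sub_ne (w := x * z) (by linarith)
  have n2 := one_sub_ne (w := y * z) (by linarith)
  have n3 := one_sub_ne hx1
  have harg : (Y - X) * (1 - z) / ((1 - x) / (1 - x * z)) =
      (y - x) * (1 - z) / ((1 - x) * (1 - y * z)) := by
    have hYX : Y - X = (y - x) / ((1 - y * z) * (1 - x * z)) := by
      rw [hX, hY, div_sub_div _ _ n2 n1]
      congr 1; ring
    rw [hYX]
    generalize 1 - x * z = A at *
    generalize 1 - y * z = B at *
    generalize 1 - x = D at *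
    field_simp
  rw [key, hXs, harg, cpow_div_near (one_sub_re hx1) (one_sub_re (w := x * z) (by linarith)),
    neg_neg, show γ - α = -α + γ by ring, Complex.cpow_add _ _ n1]
  ring

theorem ggr_triple_sum_eq_second_form (α β γ : ℂ)
    (hαβ : ∀ n : ℤ, α + β ≠ (n : ℂ)) (hγ : ∀ n : ℤ, γ ≠ (n : ℂ)) :
    ∃ ε : ℝ, 0 < ε ∧ ∀ x y z : ℂ, ‖x‖ < ε → ‖y‖ < ε → ‖z‖ < ε →
      Summable (fun p : ℕ × ℕ × ℕ => ‖ggrTerm α β γ x y z p‖) ∧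
      (∑' p : ℕ × ℕ × ℕ, ggrTerm α β γ x y z p) =
        (1 - z) ^ (α + β - 1) * (1 - x * z) ^ (γ - α) * (1 - x) ^ (-γ) *
          (1 - y * z) ^ (-β) *
          F21 β γ (α + β) ((y - x) * (1 - z) / ((1 - x) * (1 - y * z))) := by
  obtain ⟨K, hK1, hK⟩ := ratio_bound γ hαβ
  set M : ℝ := K + (‖α‖ + 1) + (‖β‖ + 1) + (‖1 - (α + β)‖ + 1) with hMdef
  have a0 := norm_nonneg α
  have b0 := norm_nonneg β
  have c0 := norm_nonneg (1 - (α + β))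
  have hM : 1 ≤ M := by linarith
  refine ⟨1 / (100 * M ^ 2), by positivity, fun x y z hx hy hz => ?_⟩
  refine ggr_core hM hαβ hγ (fun n => ?_) (fun n => ?_) (fun n => ?_) (fun m N => ?_) hx hy hz
  · exact (rr_bound _ n).trans (pow_le_pow_left₀ (by positivity) (by linarith) n)
  · exact (rr_bound _ n).trans (pow_le_pow_left₀ (by positivity) (by linarith) n)
  · exact (rr_bound _ n).trans (pow_le_pow_left₀ (by positivity) (by linarith) n)
  · exact (hK m N).trans (pow_le_pow_left₀ (by positivity) (by linarith) N)
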